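/- arXiv:2510.20530 — 2 statements merged into one kernel-verified Lean document; each statement's English description precedes it below -/
import Mathlib

section
/- Fix an integer d ≥ 2 and a unit vector ψ ∈ ℂ^d. Consider single-call probabilistic protocols (S, S_ch) with d_F = d, together with p ∈ ℝ, satisfying S ⋆ U = p · U†|ψ⟩⟨ψ|U for all U ∈ SU(d) (exact probabilistic unitary inversion on the known pure state ψ, since U^{-1} = U† for unitary U). If d > 2, then every such protocol has p = 0. If d = 2, then every such protocol has p ≤ 1/2 and there exists one with p = 1/2; hence the maximal success probability equals 1/2 for d = 2 and 0 for d > 2. -/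
open Matrix Kronecker BigOperators ComplexOrder

noncomputable section

/-- Entrywise complex conjugate `U̅` of a matrix. -/
def mconj {d : ℕ} (U : Matrix (Fin d) (Fin d) ℂ) : Matrix (Fin d) (Fin d) ℂ :=
  U.map (starRingEnd ℂ)

/-- Rank-one outer product `|v⟩⟨v|`. -/
def outer {n : Type*} (v : n → ℂ) : Matrix n n ℂ :=
  Matrix.vecMulVec v (star v)

/-- Choi vector `|U⟩⟩ = Σ_i e_i ⊗ U e_i`. -/
def choiVec {d : ℕ} (U : Matrix (Fin d) (Fin d) ℂ) : Fin d × Fin d → ℂ :=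
  fun p => U p.2 p.1

/-- `|U⟩⟩⟨⟨U|`. -/
def choiProj {d : ℕ} (U : Matrix (Fin d) (Fin d) ℂ) :
    Matrix (Fin d × Fin d) (Fin d × Fin d) ℂ :=
  outer (choiVec U)

/-- Partial trace over the first tensor factor. -/
def ptrLeft {α β : Type*} [Fintype α] (S : Matrix (α × β) (α × β) ℂ) :
    Matrix β β ℂ :=
  fun b b' => ∑ a, S (a, b) (a, b')

/-- Partial trace over the second (last) tensor factor. -/
def ptrRight {α β : Type*} [Fintype β] (S : Matrix (α × β) (α × β) ℂ) :
    Matrix α α ℂ :=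
  fun a a' => ∑ b, S (a, b) (a', b)

/-- Action `S ⋆ U := Tr_{IO}[ S · (|U̅⟩⟩⟨⟨U̅|_{IO} ⊗ 1_F) ]` of a single-call
supermap `S` on `I ⊗ O ⊗ F` applied to the unitary channel given by `U`. -/
def act {d dF : ℕ}
    (S : Matrix ((Fin d × Fin d) × Fin dF) ((Fin d × Fin d) × Fin dF) ℂ)
    (U : Matrix (Fin d) (Fin d) ℂ) : Matrix (Fin dF) (Fin dF) ℂ :=
  ptrLeft (S * (choiProj (mconj U) ⊗ₖ (1 : Matrix (Fin dF) (Fin dF) ℂ)))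

/-- A single-call probabilistic protocol: `0 ≤ S ≤ S_ch` with
`Tr_F(S_ch) = σ ⊗ 1_d`, `σ ≥ 0`, `Tr σ = 1`. -/
def IsProtocol {d dF : ℕ}
    (S Sch : Matrix ((Fin d × Fin d) × Fin dF) ((Fin d × Fin d) × Fin dF) ℂ) : Prop :=
  S.PosSemidef ∧ (Sch - S).PosSemidef ∧
    ∃ σ : Matrix (Fin d) (Fin d) ℂ, σ.PosSemidef ∧ σ.trace = 1 ∧
      ptrRight Sch = σ ⊗ₖ (1 : Matrix (Fin d) (Fin d) ℂ)

/-- The vector `vec M ⊗ x`. -/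
def wv {d : ℕ} (M : Matrix (Fin d) (Fin d) ℂ) (x : Fin d → ℂ) : (Fin d × Fin d) × Fin d → ℂ :=
  fun q => M q.1.2 q.1.1 * x q.2

theorem act_apply {d : ℕ} (S : Matrix ((Fin d × Fin d) × Fin d) ((Fin d × Fin d) × Fin d) ℂ)
    (U : Matrix (Fin d) (Fin d) ℂ) (b b' : Fin d) :
    act S U b b' = ∑ a : Fin d × Fin d, ∑ a' : Fin d × Fin d,
      U a.2 a.1 * S (a, b) (a', b') * star (U a'.2 a'.1) := by
  unfold act ptrLeft
  refine Finset.sum_congr rfl fun a _ => ?_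
  rw [Matrix.mul_apply, Fintype.sum_prod_type]
  refine Finset.sum_congr rfl fun a' _ => ?_
  simp [choiProj, outer, choiVec, mconj, Matrix.vecMulVec_apply, Matrix.one_apply]
  ring

theorem act_quad {d : ℕ} (S : Matrix ((Fin d × Fin d) × Fin d) ((Fin d × Fin d) × Fin d) ℂ)
    (U : Matrix (Fin d) (Fin d) ℂ) (x : Fin d → ℂ) :
    star x ⬝ᵥ (act S U *ᵥ x) = star (wv (mconj U) x) ⬝ᵥ (S *ᵥ wv (mconj U) x) := by
  simp only [dotProduct, mulVec, act_apply, Finset.mul_sum, Finset.sum_mul]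
  rw [Fintype.sum_prod_type, Finset.sum_comm]
  simp only [Fintype.sum_prod_type (α₁ := Fin d × Fin d)]
  have h1 : ∀ b : Fin d, ∀ f : (Fin d × Fin d) → (Fin d × Fin d) → Fin d → ℂ,
      ∑ b', ∑ a, ∑ a', f a a' b' = ∑ a, ∑ a', ∑ b', f a a' b' := by
    intro b f
    rw [Finset.sum_comm]
    refine Finset.sum_congr rfl fun a _ => ?_
    rw [Finset.sum_comm]
  rw [Finset.sum_comm]
  rw [Finset.sum_congr rfl fun b _ => h1 b _]
  rw [Finset.sum_comm]
  refine Finset.sum_congr rfl fun a _ => ?_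
  refine Finset.sum_congr rfl fun b _ => ?_
  refine Finset.sum_congr rfl fun a' _ => ?_
  refine Finset.sum_congr rfl fun b' _ => ?_
  simp [wv, mconj]
  ring

theorem act_smul {d : ℕ} (S : Matrix ((Fin d × Fin d) × Fin d) ((Fin d × Fin d) × Fin d) ℂ)
    (U : Matrix (Fin d) (Fin d) ℂ) (c : ℂ) :
    act S (c • U) = (c * star c) • act S U := by
  ext b b'
  simp only [act_apply, Matrix.smul_apply, smul_eq_mul, Finset.mul_sum]
  refine Finset.sum_congr rfl fun a _ => ?_
  refine Finset.sum_congr rfl fun a' _ => ?_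
  simp
  ring

/-- Extension of the hypothesis from `SU(d)` to `U(d)`. -/
theorem act_unitary {d : ℕ} (hd : d ≠ 0)
    (S : Matrix ((Fin d × Fin d) × Fin d) ((Fin d × Fin d) × Fin d) ℂ) (p : ℂ)
    (X : Matrix (Fin d) (Fin d) ℂ)
    (h : ∀ U : Matrix (Fin d) (Fin d) ℂ, U ∈ Matrix.specialUnitaryGroup (Fin d) ℂ →
          act S U = p • (Uᴴ * X * U))
    (U : Matrix (Fin d) (Fin d) ℂ) (hU : U ∈ Matrix.unitaryGroup (Fin d) ℂ) :
    act S U = p • (Uᴴ * X * U) := by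
  have hdet : U.det * star U.det = 1 := (Matrix.det_of_mem_unitary hU).2
  obtain ⟨c, hc⟩ := IsAlgClosed.exists_pow_nat_eq (star U.det) (Nat.pos_of_ne_zero hd)
  have hn : ‖c‖ = 1 := by
    have h1 : ‖c‖ ^ d = 1 := by
      rw [← norm_pow, hc, norm_star]
      have h2 := congrArg norm hdet
      rw [norm_mul, norm_star, norm_one] at h2
      nlinarith [norm_nonneg U.det]
    exact (pow_eq_one_iff_of_nonneg (norm_nonneg _) hd).1 h1
  have hcc : c * star c = 1 := by
    have := Complex.mul_conj c
    rw [Complex.normSq_eq_norm_sq, hn] at this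
    simpa using this
  have hV : c • U ∈ Matrix.specialUnitaryGroup (Fin d) ℂ := by
    rw [Matrix.mem_specialUnitaryGroup_iff]
    constructor
    · rw [Matrix.mem_unitaryGroup_iff] at hU ⊢
      rw [star_smul, smul_mul_smul_comm, hU, hcc, one_smul]
    · rw [Matrix.det_smul, Fintype.card_fin, hc, mul_comm, hdet]
  have h3 := h _ hV
  rw [act_smul, hcc, one_smul] at h3
  rw [h3, Matrix.conjTranspose_smul, Matrix.smul_mul, Matrix.smul_mul, Matrix.mul_smul, smul_smul (star c),
    mul_comm (star c), hcc, one_smul]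

theorem exists_unitary_col {n : ℕ} (ψ : Fin (n+2) → ℂ) (hψ : star ψ ⬝ᵥ ψ = 1) :
    ∃ W ∈ Matrix.unitaryGroup (Fin (n+2)) ℂ, ∀ i, W i 0 = ψ i := by
  have hs : Orthonormal ℂ (({0} : Set (Fin (n+2))).domRestrict
      (fun _ : Fin (n+2) => (WithLp.toLp 2 ψ : EuclideanSpace ℂ (Fin (n+2))))) := by
    rw [orthonormal_iff_ite]
    intro i j
    have : i = j := Subsingleton.elim _ _
    subst this
    rw [if_pos rfl]
    change inner ℂ (WithLp.toLp 2 ψ : EuclideanSpace ℂ (Fin (n+2))) (WithLp.toLp 2 ψ) = 1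
    rw [EuclideanSpace.inner_eq_star_dotProduct, dotProduct_comm]
    exact hψ
  obtain ⟨b, hb⟩ := hs.exists_orthonormalBasis_extension_of_card_eq (by simp)
  refine ⟨(EuclideanSpace.basisFun (Fin (n+2)) ℂ).toBasis.toMatrix b, ?_, ?_⟩
  · exact OrthonormalBasis.toMatrix_orthonormalBasis_mem_unitary _ _
  · intro i
    simp [Module.Basis.toMatrix_apply, hb 0 rfl]

section core
variable {n : ℕ} {X : Type*} [AddCommGroup X] [Module ℂ X]

theorem core_row (K : Matrix (Fin (n+2)) (Fin (n+2)) ℂ →ₗ[ℂ] (Fin (n+2) → ℂ) →ₗ[ℂ] X)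
    (hK : ∀ V ∈ Matrix.unitaryGroup (Fin (n+2)) ℂ, ∀ x, (V *ᵥ x) 0 = 0 → K (mconj V) x = 0)
    (V : Matrix (Fin (n+2)) (Fin (n+2)) ℂ) (hV : V ∈ Matrix.unitaryGroup (Fin (n+2)) ℂ)
    (x : Fin (n+2) → ℂ) (hx : (V *ᵥ x) 0 = 0) (i : Fin (n+2)) :
    K (Matrix.vecMulVec (Pi.single i 1) (star (V i))) x = 0 := by
  set D : Matrix (Fin (n+2)) (Fin (n+2)) ℂ := Matrix.diagonal (fun j => if j = i then -1 else 1)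
    with hD
  have hDu : D ∈ Matrix.unitaryGroup (Fin (n+2)) ℂ := by
    rw [Matrix.mem_unitaryGroup_iff, hD, Matrix.star_eq_conjTranspose,
      Matrix.diagonal_conjTranspose, Matrix.diagonal_mul_diagonal, ← Matrix.diagonal_one]
    congr 1
    ext j
    by_cases h : j = i <;> simp [h]
  have h1 := hK V hV x hx
  have h2 := hK (D * V) (mul_mem hDu hV) x (by
    rw [← Matrix.mulVec_mulVec, hD, Matrix.mulVec_diagonal, hx, mul_zero])
  have h3 : Matrix.vecMulVec (Pi.single i 1) (star (V i))
      = (1/2 : ℂ) • (mconj V - mconj (D * V)) := by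
    ext a b
    simp only [Matrix.vecMulVec_apply, Matrix.smul_apply, Matrix.sub_apply, mconj, Matrix.map_apply,
      hD, Matrix.diagonal_mul]
    by_cases h : a = i
    · subst h
      simp
      ring
    · simp [h]
  rw [h3, map_smul, map_sub, LinearMap.smul_apply, LinearMap.sub_apply, h1, h2]
  simp

theorem core_row0 (K : Matrix (Fin (n+2)) (Fin (n+2)) ℂ →ₗ[ℂ] (Fin (n+2) → ℂ) →ₗ[ℂ] X)
    (hK : ∀ V ∈ Matrix.unitaryGroup (Fin (n+2)) ℂ, ∀ x, (V *ᵥ x) 0 = 0 → K (mconj V) x = 0)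
    (b x : Fin (n+2) → ℂ) (hb : b ⬝ᵥ x = 0) :
    K (Matrix.vecMulVec (Pi.single 0 1) (star b)) x = 0 := by
  by_cases h0 : b = 0
  · simp [h0]
  have hr : (0 : ℝ) < ∑ i, Complex.normSq (b i) := by
    obtain ⟨i, hi⟩ := Function.ne_iff.1 h0
    exact Finset.sum_pos' (fun i _ => Complex.normSq_nonneg _)
      ⟨i, Finset.mem_univ _, Complex.normSq_pos.2 hi⟩
  set r := ∑ i, Complex.normSq (b i) with hrd
  have hs : (Real.sqrt r : ℂ) ≠ 0 := by
    exact_mod_cast (Real.sqrt_pos.2 hr).ne'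
  have hss : (Real.sqrt r : ℂ) * (Real.sqrt r : ℂ) = r := by
    exact_mod_cast Real.mul_self_sqrt hr.le
  have hbb : star b ⬝ᵥ b = (r : ℂ) := by
    simp [dotProduct, hrd, Complex.normSq_eq_conj_mul_self]
  set c : ℂ := (Real.sqrt r : ℂ)⁻¹ with hc
  have hcs : star c = c := by simp [hc]
  have hc0 : c ≠ 0 := inv_ne_zero hs
  obtain ⟨W, hW, hWb⟩ := exists_unitary_col (c • b) (by
    rw [star_smul, smul_dotProduct, dotProduct_smul, hbb, hcs, ← hss]
    simp [hc]
    field_simp)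
  have hV : Wᵀ ∈ Matrix.unitaryGroup (Fin (n+2)) ℂ := by
    rw [Matrix.mem_unitaryGroup_iff'] at hW
    rw [Matrix.mem_unitaryGroup_iff]
    have := congrArg Matrix.transpose hW
    rw [Matrix.transpose_mul, Matrix.transpose_one] at this
    exact this
  have hrow : Wᵀ 0 = c • b := by
    ext i; simp [hWb]
  have h1 := core_row K hK Wᵀ hV x (by
    rw [Matrix.mulVec, hrow, smul_dotProduct, hb, smul_zero]) 0
  rw [hrow, star_smul, hcs, Matrix.vecMulVec_smul, map_smul, LinearMap.smul_apply] at h1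
  exact (smul_eq_zero.1 h1).resolve_left hc0

theorem vmv_single (i j : Fin (n+2)) (c : ℂ) :
    Matrix.vecMulVec (Pi.single i 1) (Pi.single j c) = c • Matrix.single i j (1:ℂ) := by
  ext a b
  simp only [Matrix.vecMulVec_apply, Matrix.smul_apply, Matrix.single_apply, Pi.single_apply]
  by_cases h : a = i <;> by_cases h' : b = j <;> simp [h, h', eq_comm]
  all_goals grind

theorem core_E (K : Matrix (Fin (n+2)) (Fin (n+2)) ℂ →ₗ[ℂ] (Fin (n+2) → ℂ) →ₗ[ℂ] X)
    (hK : ∀ V ∈ Matrix.unitaryGroup (Fin (n+2)) ℂ, ∀ x, (V *ᵥ x) 0 = 0 → K (mconj V) x = 0) :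
    K (Matrix.single 0 0 1) (Pi.single 0 1) = 0 ∧ K (Matrix.single 0 1 1) (Pi.single 1 1) = 0 := by
  have h01 : K (Matrix.single 0 1 1) (Pi.single 0 1) = 0 := by
    have := core_row0 K hK (Pi.single 1 1) (Pi.single 0 1) (by simp)
    rwa [← Pi.single_star, star_one, vmv_single, one_smul] at this
  have h10 : K (Matrix.single 0 0 1) (Pi.single 1 1) = 0 := by
    have := core_row0 K hK (Pi.single 0 1) (Pi.single 1 1) (by simp)
    rwa [← Pi.single_star, star_one, vmv_single, one_smul] at this
  have ha := core_row0 K hK (Pi.single 0 1 + Pi.single 1 (-1)) (Pi.single 0 1 + Pi.single 1 1)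
    (by simp [add_dotProduct, dotProduct_add])
  have hb := core_row0 K hK (Pi.single 0 1 + Pi.single 1 Complex.I)
    (Pi.single 0 1 + Complex.I • Pi.single 1 1)
    (by simp [add_dotProduct, dotProduct_add])
  simp only [star_add, ← Pi.single_star, Matrix.vecMulVec_add, vmv_single, map_add, map_smul,
    LinearMap.add_apply, LinearMap.smul_apply, h01, h10, star_one, star_neg, one_smul, smul_zero,
    add_zero, zero_add] at ha hb
  rw [smul_smul] at hb
  have e1 : star Complex.I * Complex.I = 1 := by simp
  have e2 : Complex.I * star Complex.I = 1 := by simp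
  simp only [e1, e2, one_smul, neg_smul] at ha hb
  set A := K (Matrix.single 0 0 1) (Pi.single 0 1)
  set B := K (Matrix.single 0 1 1) (Pi.single 1 1)
  have hAB : A = B := by
    rwa [add_neg_eq_zero] at ha
  rw [← hAB, ← two_smul ℂ] at hb
  have : A = 0 := (smul_eq_zero.1 hb).resolve_left two_ne_zero
  exact ⟨this, hAB ▸ this⟩

theorem core_big (K : Matrix (Fin (n+2)) (Fin (n+2)) ℂ →ₗ[ℂ] (Fin (n+2) → ℂ) →ₗ[ℂ] X)
    (hK : ∀ V ∈ Matrix.unitaryGroup (Fin (n+2)) ℂ, ∀ x, (V *ᵥ x) 0 = 0 → K (mconj V) x = 0)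
    (hn : 0 < n) : K 1 (Pi.single 0 1) = 0 := by
  have h1 : (1 : Matrix (Fin (n+2)) (Fin (n+2)) ℂ) = ∑ i, Matrix.single i i (1:ℂ) := by
    ext a b
    simp only [Matrix.sum_apply, Matrix.single_apply, Matrix.one_apply, ite_and]
    simp
  rw [h1, map_sum, LinearMap.sum_apply]
  refine Finset.sum_eq_zero fun i _ => ?_
  by_cases hi : i = 0
  · subst hi; exact (core_E K hK).1
  obtain ⟨l, hl0, hli⟩ : ∃ l : Fin (n+2), l ≠ 0 ∧ l ≠ i := by
    by_cases h : i = ⟨1, by omega⟩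
    · exact ⟨⟨2, by omega⟩, by simp [Fin.ext_iff], by simp [Fin.ext_iff, h]⟩
    · exact ⟨⟨1, by omega⟩, by simp [Fin.ext_iff], fun h' => h h'.symm⟩
  obtain ⟨V, hVd⟩ : ∃ V : Matrix (Fin (n+2)) (Fin (n+2)) ℂ,
      ∀ a b, V a b = if Equiv.swap 0 l a = b then 1 else 0 := ⟨fun a b => _, fun a b => rfl⟩
  have hV : V ∈ Matrix.unitaryGroup (Fin (n+2)) ℂ := by
    rw [Matrix.mem_unitaryGroup_iff]
    ext a b
    rw [Matrix.mul_apply]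
    simp only [Matrix.star_apply, hVd, Matrix.one_apply]
    simp [eq_comm]
  have h2 := core_row K hK V hV (Pi.single 0 1) (by
    rw [Matrix.mulVec_single_one]
    simp [hVd, hl0]) i
  have h3 : V i = Pi.single i 1 := by
    ext b
    simp [hVd, Equiv.swap_apply_of_ne_of_ne hi hli.symm, Pi.single_apply, eq_comm]
  rw [h3, ← Pi.single_star, star_one, vmv_single, one_smul] at h2
  exact h2

theorem core_small (K : Matrix (Fin 2) (Fin 2) ℂ →ₗ[ℂ] (Fin 2 → ℂ) →ₗ[ℂ] X)
    (hK : ∀ V ∈ Matrix.unitaryGroup (Fin 2) ℂ, ∀ x, (V *ᵥ x) 0 = 0 → K (mconj V) x = 0) :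
    K 1 (Pi.single 0 1) = K (Matrix.single 1 1 1) (Pi.single 0 1) ∧
    K (Matrix.single 0 1 1 + Matrix.single 1 0 1) (Pi.single 1 1)
      = K (Matrix.single 1 0 1) (Pi.single 1 1) := by
  obtain ⟨h1, h2⟩ := core_E (n := 0) K hK
  constructor
  · have : (1 : Matrix (Fin 2) (Fin 2) ℂ) = Matrix.single 0 0 1 + Matrix.single 1 1 1 := by
      ext a b; fin_cases a <;> fin_cases b <;> simp [Matrix.single_apply]
    rw [this, map_add, LinearMap.add_apply]
    simpa using h1
  · rw [map_add, LinearMap.add_apply]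
    simpa using h2

end core

/-- The bilinear map `(M, x) ↦ S (vec (W̅ M) ⊗ x)`. -/
def Kmap {d : ℕ} (S : Matrix ((Fin d × Fin d) × Fin d) ((Fin d × Fin d) × Fin d) ℂ)
    (W : Matrix (Fin d) (Fin d) ℂ) :
    Matrix (Fin d) (Fin d) ℂ →ₗ[ℂ] (Fin d → ℂ) →ₗ[ℂ] ((Fin d × Fin d) × Fin d → ℂ) :=
  LinearMap.mk₂ ℂ (fun M x => S *ᵥ wv (mconj W * M) x)
    (by intro M M' x; rw [← Matrix.mulVec_add]; congr 1; ext q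
        simp [wv, Matrix.mul_add, add_mul])
    (by intro c M x; rw [← Matrix.mulVec_smul]; congr 1; ext q
        simp [wv, mul_assoc])
    (by intro M x x'; rw [← Matrix.mulVec_add]; congr 1; ext q
        simp [wv, mul_add])
    (by intro c M x; rw [← Matrix.mulVec_smul]; congr 1; ext q
        simp [wv]; ring)

theorem Kmap_apply {d : ℕ} (S : Matrix ((Fin d × Fin d) × Fin d) ((Fin d × Fin d) × Fin d) ℂ)
    (W M : Matrix (Fin d) (Fin d) ℂ) (x : Fin d → ℂ) :
    Kmap S W M x = S *ᵥ wv (mconj W * M) x := rfl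

theorem mconj_mul {d : ℕ} (A B : Matrix (Fin d) (Fin d) ℂ) :
    mconj (A * B) = mconj A * mconj B := by
  simp [mconj, Matrix.map_mul]

/-- The quadratic form of `S` in the frame `W`. -/
theorem quad_frame {n : ℕ}
    (S : Matrix ((Fin (n+2) × Fin (n+2)) × Fin (n+2)) ((Fin (n+2) × Fin (n+2)) × Fin (n+2)) ℂ)
    (p : ℂ) (ψ : Fin (n+2) → ℂ)
    (h : ∀ U : Matrix (Fin (n+2)) (Fin (n+2)) ℂ, U ∈ Matrix.specialUnitaryGroup (Fin (n+2)) ℂ →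
          act S U = p • (Uᴴ * outer ψ * U))
    (W : Matrix (Fin (n+2)) (Fin (n+2)) ℂ) (hW : W ∈ Matrix.unitaryGroup (Fin (n+2)) ℂ)
    (hWψ : ∀ i, W i 0 = ψ i)
    (V : Matrix (Fin (n+2)) (Fin (n+2)) ℂ) (hV : V ∈ Matrix.unitaryGroup (Fin (n+2)) ℂ)
    (x : Fin (n+2) → ℂ) :
    star (wv (mconj W * mconj V) x) ⬝ᵥ (S *ᵥ wv (mconj W * mconj V) x)
      = p * (star ((V *ᵥ x) 0) * (V *ᵥ x) 0) := by
  have h1 := act_unitary (by omega) S p (outer ψ) h (W * V) (mul_mem hW hV)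
  rw [← mconj_mul, ← act_quad, h1, Matrix.smul_mulVec, dotProduct_smul, smul_eq_mul]
  congr 1
  have hc : star ψ ᵥ* W = Pi.single 0 1 := by
    rw [Matrix.mem_unitaryGroup_iff'] at hW
    ext j
    have := congrFun (congrFun hW 0) j
    rw [Matrix.mul_apply] at this
    simp only [Matrix.vecMul, dotProduct, Pi.star_apply, ← hWψ]
    simp only [Matrix.star_apply] at this
    rw [this]
    simp [Matrix.one_apply, Pi.single_apply, eq_comm]
  have ht : star ψ ⬝ᵥ ((W * V) *ᵥ x) = (V *ᵥ x) 0 := by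
    rw [← Matrix.mulVec_mulVec, Matrix.dotProduct_mulVec, hc]
    simp
  rw [← ht, ← Matrix.mulVec_mulVec, ← Matrix.mulVec_mulVec, outer, Matrix.vecMulVec_mulVec,
    Matrix.dotProduct_mulVec, ← Matrix.star_mulVec]
  simp only [dotProduct_smul, MulOpposite.smul_eq_mul_unop, MulOpposite.unop_op]
  rw [← Matrix.star_dotProduct]

theorem frame_zero {n : ℕ}
    (S : Matrix ((Fin (n+2) × Fin (n+2)) × Fin (n+2)) ((Fin (n+2) × Fin (n+2)) × Fin (n+2)) ℂ)
    (hS : S.PosSemidef)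
    (p : ℂ) (ψ : Fin (n+2) → ℂ)
    (h : ∀ U : Matrix (Fin (n+2)) (Fin (n+2)) ℂ, U ∈ Matrix.specialUnitaryGroup (Fin (n+2)) ℂ →
          act S U = p • (Uᴴ * outer ψ * U))
    (W : Matrix (Fin (n+2)) (Fin (n+2)) ℂ) (hW : W ∈ Matrix.unitaryGroup (Fin (n+2)) ℂ)
    (hWψ : ∀ i, W i 0 = ψ i) :
    ∀ V ∈ Matrix.unitaryGroup (Fin (n+2)) ℂ, ∀ x, (V *ᵥ x) 0 = 0 → Kmap S W (mconj V) x = 0 := by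
  intro V hV x hx
  rw [Kmap_apply, ← hS.dotProduct_mulVec_zero_iff, quad_frame S p ψ h W hW hWψ V hV x, hx]
  simp

theorem herm_quad {m : Type*} [Fintype m] (S : Matrix m m ℂ) (hS : S.PosSemidef) (u v : m → ℂ)
    (h : S *ᵥ u = S *ᵥ v) : star u ⬝ᵥ (S *ᵥ u) = star v ⬝ᵥ (S *ᵥ v) := by
  have e : ∀ a b : m → ℂ, star a ⬝ᵥ (S *ᵥ b) = star (S *ᵥ a) ⬝ᵥ b := by
    intro a b
    rw [Matrix.star_mulVec, hS.isHermitian.eq, Matrix.dotProduct_mulVec]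
  rw [h, e u v, h, ← e]

theorem mconj_one {d : ℕ} : mconj (1 : Matrix (Fin d) (Fin d) ℂ) = 1 := by
  simp [mconj]

theorem case_big (n : ℕ) (hn : 0 < n) (ψ : Fin (n+2) → ℂ) (hψ : star ψ ⬝ᵥ ψ = 1)
    (S : Matrix ((Fin (n+2) × Fin (n+2)) × Fin (n+2)) ((Fin (n+2) × Fin (n+2)) × Fin (n+2)) ℂ)
    (hS : S.PosSemidef) (p : ℝ)
    (h : ∀ U : Matrix (Fin (n+2)) (Fin (n+2)) ℂ, U ∈ Matrix.specialUnitaryGroup (Fin (n+2)) ℂ →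
          act S U = (p : ℂ) • (Uᴴ * outer ψ * U)) : p = 0 := by
  obtain ⟨W, hW, hWψ⟩ := exists_unitary_col ψ hψ
  have h1 := core_big (Kmap S W) (frame_zero S hS p ψ h W hW hWψ) hn
  have h2 := quad_frame S p ψ h W hW hWψ 1 (one_mem _) (Pi.single 0 1)
  rw [Kmap_apply] at h1
  rw [mconj_one, h1] at h2
  simpa using h2.symm

/-- The bound by the marginal. -/
theorem marg_bound {S Sch : Matrix ((Fin 2 × Fin 2) × Fin 2) ((Fin 2 × Fin 2) × Fin 2) ℂ}
    (hS : S.PosSemidef) (hSch : (Sch - S).PosSemidef) (σ : Matrix (Fin 2) (Fin 2) ℂ)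
    (hσ : ptrRight Sch = σ ⊗ₖ (1 : Matrix (Fin 2) (Fin 2) ℂ))
    (W : Matrix (Fin 2) (Fin 2) ℂ) (hW : W ∈ Matrix.unitaryGroup (Fin 2) ℂ) (j k : Fin 2) :
    star (wv (mconj W * Matrix.single 1 j 1) (Pi.single k 1)) ⬝ᵥ
      (S *ᵥ wv (mconj W * Matrix.single 1 j 1) (Pi.single k 1)) ≤ σ j j := by
  have hP : Sch.PosSemidef := by simpa using hSch.add hS
  set w : Fin 2 → (Fin 2 × Fin 2) × Fin 2 → ℂ :=
    fun k => wv (mconj W * Matrix.single 1 j 1) (Pi.single k 1) with hw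
  have h1 : star (w k) ⬝ᵥ (S *ᵥ w k) ≤ star (w k) ⬝ᵥ (Sch *ᵥ w k) := by
    have := hSch.dotProduct_mulVec_nonneg (w k)
    rwa [Matrix.sub_mulVec, dotProduct_sub, sub_nonneg] at this
  have h2 : star (w k) ⬝ᵥ (Sch *ᵥ w k) ≤ ∑ l, star (w l) ⬝ᵥ (Sch *ᵥ w l) :=
    Finset.single_le_sum (f := fun l => star (w l) ⬝ᵥ (Sch *ᵥ w l))
      (fun l _ => hP.dotProduct_mulVec_nonneg (w l)) (Finset.mem_univ k)
  refine (h1.trans h2).trans (le_of_eq ?_)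
  have hWW : ∑ o, W o 1 * star (W o 1) = 1 := by
    rw [Matrix.mem_unitaryGroup_iff'] at hW
    have := congrFun (congrFun hW 1) 1
    simp only [Matrix.mul_apply, Matrix.star_apply, Matrix.one_apply_eq] at this
    rw [← this]
    exact Finset.sum_congr rfl fun o _ => mul_comm _ _
  have hT : ∀ o o', ∑ l, Sch ((j, o), l) ((j, o'), l) = σ j j * (1 : Matrix (Fin 2) (Fin 2) ℂ) o o' := by
    intro o o'
    exact congrFun (congrFun hσ (j, o)) (j, o')
  have hwv : ∀ l i o b, w l ((i, o), b) = if i = j ∧ b = l then star (W o 1) else 0 := by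
    intro l i o b
    simp only [hw, wv, mconj, Matrix.mul_apply, Matrix.single_apply, Pi.single_apply]
    by_cases h : i = j <;> by_cases h' : b = l <;> simp [h, h', eq_comm]
    all_goals grind
  have hq : ∀ l, star (w l) ⬝ᵥ (Sch *ᵥ w l)
      = ∑ o, ∑ o', W o 1 * Sch ((j, o), l) ((j, o'), l) * star (W o' 1) := by
    intro l
    simp only [dotProduct, mulVec, Fintype.sum_prod_type, Pi.star_apply, hwv, ite_and]
    simp [Finset.mul_sum, apply_ite, ite_mul, mul_ite, Finset.sum_ite_irrel, mul_assoc]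
    ring
  simp only [hq]
  rw [Finset.sum_comm]
  have hfin : ∀ o, ∑ l, ∑ o', W o 1 * Sch ((j, o), l) ((j, o'), l) * star (W o' 1)
      = σ j j * (W o 1 * star (W o 1)) := by
    intro o
    rw [Finset.sum_comm]
    have : ∀ o', ∑ l, W o 1 * Sch ((j, o), l) ((j, o'), l) * star (W o' 1)
       = W o 1 * (σ j j * (1 : Matrix (Fin 2) (Fin 2) ℂ) o o') * star (W o' 1) := by
      intro o'
      rw [← hT, Finset.mul_sum, Finset.sum_mul]
    simp only [this, Matrix.one_apply]
    simp
    ring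
  simp only [hfin]
  rw [← Finset.mul_sum, hWW, mul_one]

theorem case_two_bound (ψ : Fin 2 → ℂ) (hψ : star ψ ⬝ᵥ ψ = 1)
    (S Sch : Matrix ((Fin 2 × Fin 2) × Fin 2) ((Fin 2 × Fin 2) × Fin 2) ℂ) (p : ℝ)
    (hp : IsProtocol S Sch)
    (h : ∀ U : Matrix (Fin 2) (Fin 2) ℂ, U ∈ Matrix.specialUnitaryGroup (Fin 2) ℂ →
          act S U = (p : ℂ) • (Uᴴ * outer ψ * U)) : p ≤ 1 / 2 := by
  obtain ⟨hS, hSch, σ, -, htr, hσ⟩ := hp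
  obtain ⟨W, hW, hWψ⟩ := exists_unitary_col (n := 0) ψ hψ
  obtain ⟨h1, h2⟩ := core_small (Kmap S W) (frame_zero (n := 0) S hS p ψ h W hW hWψ)
  have q1 := quad_frame (n := 0) S p ψ h W hW hWψ 1 (one_mem _) (Pi.single 0 1)
  set V : Matrix (Fin 2) (Fin 2) ℂ := Matrix.single 0 1 1 + Matrix.single 1 0 1 with hVd
  have hVu : V ∈ Matrix.unitaryGroup (Fin 2) ℂ := by
    rw [Matrix.mem_unitaryGroup_iff]
    ext a b
    fin_cases a <;> fin_cases b <;> simp [hVd, Matrix.mul_apply, Matrix.single_apply]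
  have hVc : mconj V = V := by
    ext a b
    fin_cases a <;> fin_cases b <;> simp [hVd, mconj, Matrix.single_apply]
  have q2 := quad_frame (n := 0) S p ψ h W hW hWψ V hVu (Pi.single 1 1)
  rw [mconj_one] at q1
  rw [hVc] at q2
  rw [Kmap_apply, Kmap_apply] at h1 h2
  have e1 := (herm_quad S hS _ _ h1).symm.trans q1
  have e2 := (herm_quad S hS _ _ h2).symm.trans q2
  have b1 := marg_bound hS hSch σ hσ W hW 1 0
  have b2 := marg_bound hS hSch σ hσ W hW 0 1
  rw [e1] at b1
  rw [e2] at b2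
  simp [hVd, Matrix.single_apply] at b1 b2
  rw [Matrix.trace_fin_two] at htr
  have := (add_le_add b2 b1).trans_eq htr
  have h3 : p + p ≤ 1 := by exact_mod_cast this
  linarith

/-- Choi-type vector of the optimal qubit protocol. -/
def sv (φ : Fin 2 → ℂ) : (Fin 2 × Fin 2) × Fin 2 → ℂ :=
  fun q => if q.1.1 = q.2 then 0 else (if q.1.1 = 0 then -1 else 1) * φ q.1.2

theorem outer_psd {m : Type*} [Fintype m] (v : m → ℂ) : ((1/2 : ℂ) • outer v).PosSemidef := by
  refine Matrix.PosSemidef.smul (Matrix.posSemidef_vecMulVec_self_star v) ?_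
  rw [Complex.le_def]
  norm_num

theorem case_two_exists (ψ : Fin 2 → ℂ) (hψ : star ψ ⬝ᵥ ψ = 1) :
    ∃ S Sch : Matrix ((Fin 2 × Fin 2) × Fin 2) ((Fin 2 × Fin 2) × Fin 2) ℂ,
        IsProtocol S Sch ∧
        ∀ U : Matrix (Fin 2) (Fin 2) ℂ, U ∈ Matrix.specialUnitaryGroup (Fin 2) ℂ →
          act S U = ((1 / 2 : ℝ) : ℂ) • (Uᴴ * outer ψ * U) := by
  refine ⟨(1/2 : ℂ) • outer (sv ![-ψ 1, ψ 0]),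
    (1/2 : ℂ) • outer (sv ![-ψ 1, ψ 0]) + (1/2 : ℂ) • outer (sv ![star (ψ 0), star (ψ 1)]),
    ⟨outer_psd _, ?_, ?_⟩, ?_⟩
  · rw [add_sub_cancel_left]
    exact outer_psd _
  · have h12 : (0:ℂ) ≤ 1/2 := by
      rw [Complex.le_def]
      norm_num
    refine ⟨(1/2 : ℂ) • 1, Matrix.PosSemidef.smul Matrix.PosSemidef.one h12, ?_, ?_⟩
    · simp
    · simp [dotProduct, Fin.sum_univ_two] at hψ
      ext ⟨i, o⟩ ⟨i', o'⟩
      fin_cases i <;> fin_cases o <;> fin_cases i' <;> fin_cases o' <;>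
        simp [ptrRight, outer, sv, Matrix.vecMulVec_apply, Matrix.kroneckerMap_apply] <;>
        first | ring1 | linear_combination (1/2 : ℂ) * hψ
  · intro U hU
    rw [Matrix.mem_specialUnitaryGroup_iff] at hU
    obtain ⟨hU, hdet⟩ := hU
    have hadj : Uᴴ = U.adjugate := by
      rw [Matrix.mem_unitaryGroup_iff, Matrix.star_eq_conjTranspose] at hU
      calc Uᴴ = (U.adjugate * U) * Uᴴ := by rw [Matrix.adjugate_mul, hdet, one_smul, one_mul]
        _ = U.adjugate := by rw [Matrix.mul_assoc, hU, mul_one]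
    have hout : Uᴴ * outer ψ * U = outer (U.adjugate *ᵥ ψ) := by
      rw [outer, outer, Matrix.mul_vecMulVec, Matrix.vecMulVec_mul, ← hadj, Matrix.star_mulVec,
        Matrix.conjTranspose_conjTranspose]
    have hg0 : (U.adjugate *ᵥ ψ) 0 = U 1 1 * ψ 0 - U 0 1 * ψ 1 := by
      rw [Matrix.adjugate_fin_two]
      simp [Matrix.mulVec, dotProduct, Fin.sum_univ_two]
      ring
    have hg1 : (U.adjugate *ᵥ ψ) 1 = - U 1 0 * ψ 0 + U 0 0 * ψ 1 := by
      rw [Matrix.adjugate_fin_two]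
      simp [Matrix.mulVec, dotProduct, Fin.sum_univ_two]
    rw [hout]
    clear hout
    generalize U.adjugate *ᵥ ψ = g at hg0 hg1
    ext b b'
    rw [act_apply]
    fin_cases b <;> fin_cases b' <;>
      simp [Fintype.sum_prod_type, outer, sv, Matrix.vecMulVec_apply, hg0, hg1] <;> ring

/-- **Probabilistic exact unitary inversion on a known pure state, single call.**
For `d > 2` every protocol implementing `U ↦ p · U†|ψ⟩⟨ψ|U` for all `U ∈ SU(d)` has
`p = 0`; for `d = 2` every such protocol has `p ≤ 1/2` and this value is attained. -/
theorem inversion_single_call_known_pure_state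
    (d : ℕ) (hd : 2 ≤ d) (ψ : Fin d → ℂ) (hψ : star ψ ⬝ᵥ ψ = 1) :
    (2 < d →
      ∀ (S Sch : Matrix ((Fin d × Fin d) × Fin d) ((Fin d × Fin d) × Fin d) ℂ) (p : ℝ),
        IsProtocol S Sch →
        (∀ U : Matrix (Fin d) (Fin d) ℂ, U ∈ Matrix.specialUnitaryGroup (Fin d) ℂ →
          act S U = (p : ℂ) • (Uᴴ * outer ψ * U)) →
        p = 0) ∧
    (d = 2 →
      (∀ (S Sch : Matrix ((Fin d × Fin d) × Fin d) ((Fin d × Fin d) × Fin d) ℂ) (p : ℝ),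
        IsProtocol S Sch →
        (∀ U : Matrix (Fin d) (Fin d) ℂ, U ∈ Matrix.specialUnitaryGroup (Fin d) ℂ →
          act S U = (p : ℂ) • (Uᴴ * outer ψ * U)) →
        p ≤ 1 / 2) ∧
      (∃ S Sch : Matrix ((Fin d × Fin d) × Fin d) ((Fin d × Fin d) × Fin d) ℂ,
        IsProtocol S Sch ∧
        ∀ U : Matrix (Fin d) (Fin d) ℂ, U ∈ Matrix.specialUnitaryGroup (Fin d) ℂ →
          act S U = ((1 / 2 : ℝ) : ℂ) • (Uᴴ * outer ψ * U))) := by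
  obtain ⟨n, rfl⟩ : ∃ n, d = n + 2 := ⟨d - 2, by omega⟩
  refine ⟨fun h S Sch p hp hact => case_big n (by omega) ψ hψ S hp.1 p hact, fun h => ?_⟩
  obtain rfl : n = 0 := by omega
  exact ⟨fun S Sch p hp hact => case_two_bound ψ hψ S Sch p hp hact, case_two_exists ψ hψ⟩
end
end

section
/- Fix integers d ≥ 2 and m ≥ 1 and a unit vector ψ ∈ ℂ^m ⊗ ℂ^d. Consider bipartite single-call probabilistic protocols (S, S_ch), together with p ∈ ℝ, satisfying S ⋆ U = p · (1_m ⊗ U̅)|ψ⟩⟨ψ|(1_m ⊗ U̅)† for all U ∈ SU(d) (exact probabilistic unitary complex conjugation on one part of the known bipartite pure state ψ). If d > 2, then every such protocol has p = 0. If d = 2, then there exists such a protocol with p = 1; hence the maximal success probability equals 1 for d = 2 and 0 for d > 2. -/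
open Matrix Kronecker BigOperators ComplexOrder

noncomputable section

/-- Action `S ⋆ U := Tr_{IO}[ S · (|U̅⟩⟩⟨⟨U̅|_{IO} ⊗ 1_{AF}) ]` of a bipartite
single-call supermap `S` on `I ⊗ O ⊗ A ⊗ F`, applied to the unitary channel `U`. -/
def actB {d m : ℕ}
    (S : Matrix ((Fin d × Fin d) × (Fin m × Fin d)) ((Fin d × Fin d) × (Fin m × Fin d)) ℂ)
    (U : Matrix (Fin d) (Fin d) ℂ) : Matrix (Fin m × Fin d) (Fin m × Fin d) ℂ :=
  ptrLeft (S * (choiProj (mconj U) ⊗ₖ (1 : Matrix (Fin m × Fin d) (Fin m × Fin d) ℂ)))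

/-- A bipartite single-call probabilistic protocol (auxiliary output dimension `m`):
`0 ≤ S ≤ S_ch` with `Tr_{AF}(S_ch) = σ ⊗ 1_d`, `σ ≥ 0`, `Tr σ = 1`. -/
def IsProtocolB {d m : ℕ}
    (S Sch : Matrix ((Fin d × Fin d) × (Fin m × Fin d)) ((Fin d × Fin d) × (Fin m × Fin d)) ℂ) :
    Prop :=
  S.PosSemidef ∧ (Sch - S).PosSemidef ∧
    ∃ σ : Matrix (Fin d) (Fin d) ℂ, σ.PosSemidef ∧ σ.trace = 1 ∧
      ptrRight Sch = σ ⊗ₖ (1 : Matrix (Fin d) (Fin d) ℂ)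

/-- Largest eigenvalue of a matrix: the supremum of the real parts of its spectrum
(for a positive semidefinite matrix this is the maximal eigenvalue, i.e. the
operator norm). -/
def lamMax {n : ℕ} (M : Matrix (Fin n) (Fin n) ℂ) : ℝ :=
  sSup (Complex.re '' spectrum ℂ M)

section helpers

/-- The permutation acting by rows. -/
lemma perm_unitary {d : ℕ} (σ : Equiv.Perm (Fin d)) (X : Matrix (Fin d) (Fin d) ℂ)
    (hX : X ∈ Matrix.unitaryGroup (Fin d) ℂ) :
    X.submatrix σ.symm id ∈ Matrix.unitaryGroup (Fin d) ℂ := by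
  rw [Matrix.mem_unitaryGroup_iff'] at hX ⊢
  rw [Matrix.star_eq_conjTranspose] at hX ⊢
  rw [Matrix.conjTranspose_submatrix, Matrix.submatrix_mul_equiv, hX]
  simp

/-- Column-flip step. -/
lemma step_flip {d : ℕ} (z : Fin d) (L : Matrix (Fin d) (Fin d) ℂ →ₗ[ℂ] (Fin d → ℂ))
    (hL : ∀ X ∈ Matrix.unitaryGroup (Fin d) ℂ, ∀ k, k ≠ z → ∑ j, L X j * X j k = 0)
    (X : Matrix (Fin d) (Fin d) ℂ) (hX : X ∈ Matrix.unitaryGroup (Fin d) ℂ)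
    (l k : Fin d) (hk : k ≠ z) :
    ∑ j, L (X * Matrix.single l l 1) j * X j k = 0 := by
  classical
  let D : Matrix (Fin d) (Fin d) ℂ := 1 - (2 : ℂ) • Matrix.single l l 1
  have hD : D ∈ Matrix.unitaryGroup (Fin d) ℂ := by
    rw [Matrix.mem_unitaryGroup_iff', Matrix.star_eq_conjTranspose]
    simp only [D, Matrix.conjTranspose_sub, Matrix.conjTranspose_smul, Matrix.conjTranspose_one,
      Matrix.conjTranspose_single, sub_mul, mul_sub, Matrix.smul_mul, Matrix.mul_smul, mul_one,
      one_mul, Matrix.single_mul_single_same, star_one, star_ofNat]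
    module
  have h1 := hL X hX k hk
  have h2 := hL (X * D) (mul_mem hX hD) k hk
  have h3 : ∀ j, (X * D) j k = (if k = l then -1 else 1) * X j k := by
    intro j
    simp only [D, mul_sub, Matrix.mul_smul, mul_one, Matrix.sub_apply, Matrix.smul_apply]
    by_cases h : k = l
    · subst h; simp; ring
    · simp [h, Matrix.mul_single_apply_of_ne _ _ _ _ _ h]
  have h4 : ∑ j, L (X * D) j * X j k = 0 := by
    have : (if k = l then (-1 : ℂ) else 1) * ∑ j, L (X * D) j * X j k = 0 := by
      rw [← h2, Finset.mul_sum]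
      refine Finset.sum_congr rfl fun j _ => ?_
      rw [h3]; ring
    rcases mul_eq_zero.1 this with h | h
    · split_ifs at h <;> simp at h
    · exact h
  have h5 : L (X * D) = L X - (2 : ℂ) • L (X * Matrix.single l l 1) := by
    simp only [D, mul_sub, Matrix.mul_smul, mul_one, map_sub, map_smul]
  rw [h5] at h4
  simp only [Pi.sub_apply, Pi.smul_apply, sub_mul, Finset.sum_sub_distrib, h1, smul_eq_mul,
    mul_assoc, ← Finset.mul_sum] at h4
  simpa using h4

lemma perm_step {d : ℕ} (z : Fin d) (L : Matrix (Fin d) (Fin d) ℂ →ₗ[ℂ] (Fin d → ℂ))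
    (hL : ∀ X ∈ Matrix.unitaryGroup (Fin d) ℂ, ∀ k, k ≠ z → ∑ j, L X j * X j k = 0)
    (σ : Equiv.Perm (Fin d)) (l k : Fin d) (hk : k ≠ z) :
    L (Matrix.single (σ l) l 1) (σ k) = 0 := by
  have h := step_flip z L hL _ (perm_unitary σ 1 (one_mem _)) l k hk
  have e : (1 : Matrix (Fin d) (Fin d) ℂ).submatrix σ.symm id * Matrix.single l l 1
      = Matrix.single (σ l) l 1 := by
    ext i j
    by_cases hj : j = l
    · subst hj
      have : σ.symm i = j ↔ σ j = i := by
        rw [Equiv.symm_apply_eq]; exact eq_comm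
      simp [Matrix.one_apply, Matrix.single_apply, this]
    · rw [Matrix.mul_single_apply_of_ne _ _ _ _ _ hj, Matrix.single_apply_of_col_ne _ _ (Ne.symm hj)]
  rw [e, Finset.sum_eq_single (σ k)] at h
  · simpa [Matrix.submatrix_apply, Matrix.one_apply] using h
  · intro j _ hj
    have : σ.symm j ≠ k := by
      intro h; exact hj (by rw [← h]; simp)
    simp [this, Matrix.one_apply]
  · simp

lemma exists_perm2 {d : ℕ} (l k a b : Fin d) (hlk : l ≠ k) (hab : a ≠ b) :
    ∃ σ : Equiv.Perm (Fin d), σ l = a ∧ σ k = b := by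
  refine ⟨Equiv.swap ((Equiv.swap l a) k) b * Equiv.swap l a, ?_, ?_⟩
  · simp only [Equiv.Perm.mul_apply, Equiv.swap_apply_left]
    refine Equiv.swap_apply_of_ne_of_ne ?_ hab
    intro h
    apply hlk
    have := congrArg (Equiv.swap l a) h
    simpa using this
  · simp

lemma off_zero {n : ℕ} (L : Matrix (Fin (n+3)) (Fin (n+3)) ℂ →ₗ[ℂ] (Fin (n+3) → ℂ))
    (hL : ∀ X ∈ Matrix.unitaryGroup (Fin (n+3)) ℂ, ∀ k, k ≠ 0 → ∑ j, L X j * X j k = 0)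
    (a b l : Fin (n+3)) (hab : a ≠ b) : L (Matrix.single a l 1) b = 0 := by
  obtain ⟨k, hk0, hkl⟩ : ∃ k : Fin (n+3), k ≠ 0 ∧ l ≠ k := by
    by_cases h : l = 1
    · exact ⟨⟨2, by omega⟩, by simp [Fin.ext_iff], by subst h; simp [Fin.ext_iff]⟩
    · exact ⟨1, by simp, h⟩
  obtain ⟨σ, rfl, rfl⟩ := exists_perm2 l k a b hkl hab
  exact perm_step 0 L hL σ l k hk0

lemma refl_unitary {n : ℕ} (s : ℂ) (hs : star s * s = 1) (v : Fin (n+3) → ℂ)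
    (hv : v = Pi.single 0 1 + (2 * s) • Pi.single 1 1) :
    (1 - (2/5 : ℂ) • Matrix.vecMulVec v (star v)) ∈ Matrix.unitaryGroup (Fin (n+3)) ℂ := by
  have hvv : star v ⬝ᵥ v = 5 := by
    have h0 : v 0 = 1 := by simp [hv]
    have h1 : v 1 = 2 * s := by simp [hv]
    have h2 : ∀ i : Fin (n+1), v i.succ.succ = 0 := by
      intro i
      have e1 : i.succ.succ ≠ (1 : Fin (n+3)) := fun h =>
        absurd (congrArg Fin.val h) (by simp)
      have e0 : i.succ.succ ≠ (0 : Fin (n+3)) := Fin.succ_ne_zero _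
      simp [hv, Pi.single_eq_of_ne e1, Pi.single_eq_of_ne e0]
    rw [dotProduct, Fin.sum_univ_succ, Fin.sum_univ_succ, Finset.sum_eq_zero]
    swap
    · intro i _
      simp [h2]
    simp [h0, h1]
    have : (starRingEnd ℂ) s * s = 1 := hs
    linear_combination 4 * this
  rw [Matrix.mem_unitaryGroup_iff', Matrix.star_eq_conjTranspose]
  have hT : (Matrix.vecMulVec v (star v))ᴴ = Matrix.vecMulVec v (star v) := by
    simp [Matrix.conjTranspose_vecMulVec]
  have hT2 : Matrix.vecMulVec v (star v) * Matrix.vecMulVec v (star v)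
      = (5 : ℂ) • Matrix.vecMulVec v (star v) := by
    rw [Matrix.vecMulVec_mul_vecMulVec, hvv]
    ext i j; simp [Matrix.vecMulVec_apply]; try ring
  have h25 : star (2/5 : ℂ) = 2/5 := by simp
  simp only [Matrix.conjTranspose_sub, Matrix.conjTranspose_smul, Matrix.conjTranspose_one, hT,
    sub_mul, mul_sub, Matrix.smul_mul, Matrix.mul_smul, mul_one, one_mul, hT2, h25]
  module

lemma refl_step {n : ℕ} (L : Matrix (Fin (n+3)) (Fin (n+3)) ℂ →ₗ[ℂ] (Fin (n+3) → ℂ))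
    (hL : ∀ X ∈ Matrix.unitaryGroup (Fin (n+3)) ℂ, ∀ k, k ≠ 0 → ∑ j, L X j * X j k = 0)
    (s : ℂ) (hs : star s * s = 1) :
    s * L (Matrix.single 1 0 1) 1 = star s * L (Matrix.single 0 0 1) 0 := by
  obtain ⟨v, hv⟩ : ∃ v : Fin (n+3) → ℂ, v = Pi.single 0 1 + (2 * s) • Pi.single 1 1 := ⟨_, rfl⟩
  have h0 : v 0 = 1 := by simp [hv]
  have h1 : v 1 = 2 * s := by simp [hv]
  have n1 : ∀ i : Fin (n+1), i.succ.succ ≠ (1 : Fin (n+3)) := fun i h =>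
    absurd (congrArg Fin.val h) (by simp)
  have n0 : ∀ i : Fin (n+1), i.succ.succ ≠ (0 : Fin (n+3)) := fun i => Fin.succ_ne_zero _
  have h2 : ∀ i : Fin (n+1), v i.succ.succ = 0 := by
    intro i
    simp [hv, Pi.single_eq_of_ne (n1 i), Pi.single_eq_of_ne (n0 i)]
  have h := step_flip 0 L hL _ (refl_unitary s hs v hv) 0 1 (by simp)
  have e : (1 - (2/5 : ℂ) • Matrix.vecMulVec v (star v)) * Matrix.single 0 0 1
      = (3/5 : ℂ) • Matrix.single 0 0 1 + (-(4/5) * s) • Matrix.single 1 0 1 := by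
    ext i j
    by_cases hj : j = 0
    · subst hj
      refine Fin.cases ?_ (fun i => ?_) i
      · simp [Matrix.vecMulVec_apply, h0]; norm_num
      · refine Fin.cases ?_ (fun i => ?_) i
        · simp [Matrix.vecMulVec_apply, h0, h1]; ring
        · have m1 := (n1 i).symm
          have m0 := (n0 i).symm
          simp [Matrix.vecMulVec_apply, h2, Matrix.one_apply, n0 i, Matrix.single_apply, m1, m0]
    · rw [Matrix.mul_single_apply_of_ne _ _ _ _ _ hj]
      simp [Matrix.single_apply, Ne.symm hj]
  have o1 := off_zero L hL 0 1 0 (by simp)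
  have o2 := off_zero L hL 1 0 0 (by simp)
  rw [e] at h
  have hs' : (starRingEnd ℂ) s * s = 1 := hs
  rw [Fin.sum_univ_succ, Fin.sum_univ_succ, Finset.sum_eq_zero] at h
  · simp only [map_add, map_smul, Pi.add_apply, Pi.smul_apply, smul_eq_mul, Fin.succ_zero_eq_one,
      o1, o2] at h
    simp [Matrix.vecMulVec_apply, h0, h1] at h
    simp
    linear_combination (25/12) * h + (-8/3) * s * L (Matrix.single 1 0 1) 1 * hs'
  · intro i _
    simp [Matrix.vecMulVec_apply, h2, Matrix.one_apply, n1 i]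

lemma diag_zero {n : ℕ} (L : Matrix (Fin (n+3)) (Fin (n+3)) ℂ →ₗ[ℂ] (Fin (n+3) → ℂ))
    (hL : ∀ X ∈ Matrix.unitaryGroup (Fin (n+3)) ℂ, ∀ k, k ≠ 0 → ∑ j, L X j * X j k = 0) :
    L (Matrix.single 0 0 1) 0 = 0 := by
  have h1 := refl_step L hL 1 (by simp)
  have h2 := refl_step L hL Complex.I (by simp)
  simp at h1 h2
  have : Complex.I * (2 * L (Matrix.single 0 0 1) 0) = 0 := by
    rw [h1] at h2
    linear_combination h2
  simpa using this

lemma key {n : ℕ} (L : Matrix (Fin (n+3)) (Fin (n+3)) ℂ →ₗ[ℂ] (Fin (n+3) → ℂ))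
    (hL : ∀ X ∈ Matrix.unitaryGroup (Fin (n+3)) ℂ, ∀ k, k ≠ 0 → ∑ j, L X j * X j k = 0)
    (a l b : Fin (n+3)) : L (Matrix.single a l 1) b = 0 := by
  by_cases hab : a = b
  · subst hab
    by_cases hl : l = 0
    · subst hl
      let σ : Equiv.Perm (Fin (n+3)) := Equiv.swap 0 a
      let L' : Matrix (Fin (n+3)) (Fin (n+3)) ℂ →ₗ[ℂ] (Fin (n+3) → ℂ) :=
        { toFun := fun X j => L (X.submatrix σ.symm id) (σ j)
          map_add' := fun X Y => by
            ext j
            rw [Matrix.submatrix_add]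
            simp
          map_smul' := fun c X => by
            ext j
            rw [Matrix.submatrix_smul]
            simp }
      have h := diag_zero L' (by
        intro X hX k hk
        have h := hL _ (perm_unitary σ X hX) k hk
        rw [← h]
        refine Eq.trans ?_ (Equiv.sum_comp σ (fun j => L (X.submatrix σ.symm id) j * X (σ.symm j) k))
        refine Finset.sum_congr rfl fun j _ => ?_
        simp [L'])
      have e : (Matrix.single 0 0 (1 : ℂ)).submatrix σ.symm id = Matrix.single a (0 : Fin (n+3)) 1 := by
        ext i j
        simp [Matrix.single_apply, σ, Equiv.swap_apply_def]
        grind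
      have h' : L ((Matrix.single 0 0 (1 : ℂ)).submatrix σ.symm id) (σ 0) = 0 := h
      rw [e] at h'
      simpa [σ] using h'
    · have := perm_step 0 L hL (Equiv.swap l a) l l hl
      simpa using this
  · exact off_zero L hL a b l hab

lemma exists_basis {d : ℕ} (z : Fin d) (v : Fin d → ℂ) (hv : v ≠ 0) :
    ∃ V ∈ Matrix.unitaryGroup (Fin d) ℂ, ∀ k, k ≠ z → ∑ j, star (V j k) * v j = 0 := by
  let w : EuclideanSpace ℂ (Fin d) := WithLp.toLp 2 v
  have hw : w ≠ 0 := by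
    intro h; apply hv
    ext j
    have := congrArg (fun u : EuclideanSpace ℂ (Fin d) => u j) h
    simpa [w] using this
  have hw' : (‖w‖ : ℂ) ≠ 0 := by simpa using hw
  have ho : Orthonormal ℂ (({z} : Set (Fin d)).domRestrict
      (fun _ => ((‖w‖ : ℂ)⁻¹) • w)) := by
    constructor
    · intro i
      change ‖((‖w‖ : ℂ)⁻¹) • w‖ = 1
      rw [norm_smul, norm_inv, Complex.norm_real, norm_norm]
      exact inv_mul_cancel₀ (norm_ne_zero_iff.2 hw)
    · intro i j hij
      exact absurd (Subsingleton.elim i j) hij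
  obtain ⟨b, hb⟩ := ho.exists_orthonormalBasis_extension_of_card_eq (by simp)
  refine ⟨(EuclideanSpace.basisFun (Fin d) ℂ).toBasis.toMatrix b,
    OrthonormalBasis.toMatrix_orthonormalBasis_mem_unitary _ _, ?_⟩
  intro k hk
  have h0 := hb z rfl
  have h1 : inner ℂ (b k) (b z) = 0 := b.orthonormal.2 hk
  rw [h0, inner_smul_right] at h1
  have h2 : inner ℂ (b k) w = 0 := by
    rcases mul_eq_zero.1 h1 with h | h
    · exact absurd h (inv_ne_zero hw')
    · exact h
  rw [← h2]
  simp [PiLp.inner_apply, w, Module.Basis.toMatrix_apply, mul_comm]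

lemma exists_phase {d : ℕ} (hd : d ≠ 0) (X : Matrix (Fin d) (Fin d) ℂ)
    (hX : X ∈ Matrix.unitaryGroup (Fin d) ℂ) :
    ∃ c : ℂ, c ≠ 0 ∧ c • X ∈ Matrix.specialUnitaryGroup (Fin d) ℂ := by
  have hdet := Matrix.det_of_mem_unitary hX
  have hn : ‖X.det‖ = 1 := by
    have := (Unitary.mem_iff.1 hdet).1
    have h2 := congrArg norm this
    rw [norm_mul, norm_star, norm_one] at h2
    nlinarith [norm_nonneg X.det]
  have hne : X.det ≠ 0 := by intro h; simp [h] at hn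
  obtain ⟨c, hc⟩ := IsAlgClosed.exists_pow_nat_eq (X.det⁻¹) (Nat.pos_of_ne_zero hd)
  have hcn : ‖c‖ = 1 := by
    have := congrArg norm hc
    rw [norm_pow, norm_inv, hn, inv_one] at this
    exact (pow_eq_one_iff_of_nonneg (norm_nonneg _) hd).1 this
  refine ⟨c, by intro h; simp [h] at hcn, ?_⟩
  rw [Matrix.mem_specialUnitaryGroup_iff]
  constructor
  · rw [Matrix.mem_unitaryGroup_iff'] at hX ⊢
    rw [star_smul, Matrix.smul_mul, Matrix.mul_smul, hX, smul_smul]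
    have : star c * c = 1 := by
      have := Complex.conj_mul' c
      simpa [hcn] using this
    rw [this, one_smul]
  · rw [Matrix.det_smul, Fintype.card_fin, hc, inv_mul_cancel₀ hne]

lemma mconj_mconj {d : ℕ} (X : Matrix (Fin d) (Fin d) ℂ) : mconj (mconj X) = X := by
  ext i j; simp [mconj]

lemma mconj_mem {d : ℕ} (X : Matrix (Fin d) (Fin d) ℂ)
    (hX : X ∈ Matrix.specialUnitaryGroup (Fin d) ℂ) :
    mconj X ∈ Matrix.specialUnitaryGroup (Fin d) ℂ := by
  rw [Matrix.mem_specialUnitaryGroup_iff] at hX ⊢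
  constructor
  · have h := hX.1
    rw [Matrix.mem_unitaryGroup_iff'] at h ⊢
    have := congrArg mconj h
    rw [Matrix.star_eq_conjTranspose] at this ⊢
    have e1 : mconj (1 : Matrix (Fin d) (Fin d) ℂ) = 1 := by
      simp [mconj]
    rw [e1] at this
    rw [← this]
    ext i j
    simp [mconj, Matrix.mul_apply]
  · have h : (mconj X).det = (starRingEnd ℂ) X.det := by
      rw [RingHom.map_det]; rfl
    rw [h, hX.2, map_one]

lemma actB_apply {d m : ℕ}
    (S : Matrix ((Fin d × Fin d) × (Fin m × Fin d)) ((Fin d × Fin d) × (Fin m × Fin d)) ℂ)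
    (U : Matrix (Fin d) (Fin d) ℂ) (b b' : Fin m × Fin d) :
    actB S U b b' = ∑ p, ∑ q, S (p, b) (q, b') *
      (choiVec (mconj U) q * star (choiVec (mconj U) p)) := by
  simp only [actB, ptrLeft, choiProj, outer, Matrix.mul_apply]
  refine Finset.sum_congr rfl fun p _ => ?_
  rw [Fintype.sum_prod_type]
  refine Finset.sum_congr rfl fun q _ => ?_
  rw [Finset.sum_eq_single b']
  · simp [Matrix.vecMulVec_apply]
  · intro x _ hx
    simp [Matrix.one_apply, hx]
  · simp

/-- The target matrix is an outer product. -/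
lemma target_eq {d m : ℕ} (ψ : Fin m × Fin d → ℂ) (X : Matrix (Fin d) (Fin d) ℂ) :
    ((1 : Matrix (Fin m) (Fin m) ℂ) ⊗ₖ X) * outer ψ * ((1 : Matrix (Fin m) (Fin m) ℂ) ⊗ₖ X)ᴴ
      = outer (fun b : Fin m × Fin d => ∑ j, X b.2 j * ψ (b.1, j)) := by
  have h : ((1 : Matrix (Fin m) (Fin m) ℂ) ⊗ₖ X) *ᵥ ψ
      = (fun b : Fin m × Fin d => ∑ j, X b.2 j * ψ (b.1, j)) := by
    ext b
    simp only [Matrix.mulVec, dotProduct, Fintype.sum_prod_type]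
    rw [Finset.sum_eq_single b.1]
    · simp
    · intro x _ hx
      simp [Matrix.one_apply, Ne.symm hx]
    · simp
  rw [← h, outer, outer, Matrix.mul_vecMulVec, Matrix.vecMulVec_mul, Matrix.star_mulVec]

lemma null_vec {d m : ℕ}
    (S : Matrix ((Fin d × Fin d) × (Fin m × Fin d)) ((Fin d × Fin d) × (Fin m × Fin d)) ℂ)
    (hS : S.PosSemidef) (p : ℂ) (U : Matrix (Fin d) (Fin d) ℂ) (φ y : Fin m × Fin d → ℂ)
    (h : actB S U = p • outer φ) (hy : star y ⬝ᵥ φ = 0) :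
    S *ᵥ (fun z => choiVec (mconj U) z.1 * y z.2) = 0 := by
  rw [← hS.dotProduct_mulVec_zero_iff]
  have e : star (fun z : (Fin d × Fin d) × (Fin m × Fin d) => choiVec (mconj U) z.1 * y z.2) ⬝ᵥ
      S *ᵥ (fun z => choiVec (mconj U) z.1 * y z.2) = star y ⬝ᵥ (actB S U *ᵥ y) := by
    simp only [dotProduct, Matrix.mulVec, actB_apply]
    rw [Fintype.sum_prod_type, Finset.sum_comm]
    refine Finset.sum_congr rfl fun b _ => ?_
    simp only [Finset.mul_sum, Finset.sum_mul]
    conv_rhs => rw [Finset.sum_comm]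
    refine Finset.sum_congr rfl fun p _ => ?_
    rw [Fintype.sum_prod_type_right]
    refine Finset.sum_congr rfl fun b' _ => ?_
    refine Finset.sum_congr rfl fun q _ => ?_
    simp
    ring
  rw [e, h, Matrix.smul_mulVec, outer, Matrix.vecMulVec_mulVec, dotProduct_smul, dotProduct_smul, hy]
  simp

end helpers

/-- **Probabilistic exact unitary complex conjugation on part of a known bipartite
pure state, single call.** For `d > 2` every protocol implementing
`U ↦ p · (1_m ⊗ U̅)|ψ⟩⟨ψ|(1_m ⊗ U̅)†` for all `U ∈ SU(d)` has `p = 0`;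
for `d = 2` there is such a protocol with `p = 1`. -/
theorem bipartite_conjugation_single_call
    (d m : ℕ) (hd : 2 ≤ d) (hm : 1 ≤ m)
    (ψ : Fin m × Fin d → ℂ) (hψ : star ψ ⬝ᵥ ψ = 1) :
    (2 < d →
      ∀ (S Sch : Matrix ((Fin d × Fin d) × (Fin m × Fin d))
          ((Fin d × Fin d) × (Fin m × Fin d)) ℂ) (p : ℝ),
        IsProtocolB S Sch →
        (∀ U : Matrix (Fin d) (Fin d) ℂ, U ∈ Matrix.specialUnitaryGroup (Fin d) ℂ →
          actB S U = (p : ℂ) •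
            (((1 : Matrix (Fin m) (Fin m) ℂ) ⊗ₖ mconj U) * outer ψ *
              ((1 : Matrix (Fin m) (Fin m) ℂ) ⊗ₖ mconj U)ᴴ)) →
        p = 0) ∧
    (d = 2 →
      ∃ S Sch : Matrix ((Fin d × Fin d) × (Fin m × Fin d))
          ((Fin d × Fin d) × (Fin m × Fin d)) ℂ,
        IsProtocolB S Sch ∧
        ∀ U : Matrix (Fin d) (Fin d) ℂ, U ∈ Matrix.specialUnitaryGroup (Fin d) ℂ →
          actB S U = ((1 : ℝ) : ℂ) •
            (((1 : Matrix (Fin m) (Fin m) ℂ) ⊗ₖ mconj U) * outer ψ *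
              ((1 : Matrix (Fin m) (Fin m) ℂ) ⊗ₖ mconj U)ᴴ)) := by
  refine ⟨?_, ?_⟩
  · intro hd3 S Sch p hP hU
    obtain ⟨n, rfl⟩ : ∃ n, d = n + 3 := ⟨d - 3, by omega⟩
    obtain ⟨⟨a, f⟩, haf⟩ : ∃ b, ψ b ≠ 0 := by
      by_contra! hcon
      have : ψ = 0 := funext hcon
      simp [this] at hψ
    obtain ⟨V, hV, hVv⟩ := exists_basis (0 : Fin (n+3)) (fun j => ψ (a, j))
      (fun h => haf (congrFun h f))
    have hVV : V * Vᴴ = 1 := Matrix.mem_unitaryGroup_iff.1 hV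
    have hVV' : Vᴴ * V = 1 := Matrix.mem_unitaryGroup_iff'.1 hV
    have hV' : Vᴴ ∈ Matrix.unitaryGroup (Fin (n+3)) ℂ := by
      rw [Matrix.mem_unitaryGroup_iff, Matrix.star_eq_conjTranspose, Matrix.conjTranspose_conjTranspose]
      exact hVV'
    have hS := hP.1
    -- vanishing of the relevant columns of `S`
    have hcol : ∀ r (i o j : Fin (n+3)), S r ((i, o), (a, j)) = 0 := by
      intro r
      let L : Matrix (Fin (n+3)) (Fin (n+3)) ℂ →ₗ[ℂ] (Fin (n+3) → ℂ) :=
        { toFun := fun X j => ∑ q : Fin (n+3) × Fin (n+3), S r (q, (a, j)) * X q.2 q.1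
          map_add' := fun X Y => by
            ext j
            simp [mul_add, Finset.sum_add_distrib]
          map_smul' := fun c X => by
            ext j
            simp only [Matrix.smul_apply, smul_eq_mul, RingHom.id_apply, Pi.smul_apply,
              Finset.mul_sum]
            refine Finset.sum_congr rfl fun q _ => ?_
            ring }
      have hSU : ∀ X ∈ Matrix.specialUnitaryGroup (Fin (n+3)) ℂ, ∀ k, k ≠ 0 →
          ∑ j, L X j * (X * V) j k = 0 := by
        intro X hX k hk
        have hXu : Xᴴ * X = 1 :=
          Matrix.mem_unitaryGroup_iff'.1 (Matrix.mem_specialUnitaryGroup_iff.1 hX).1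
        have h1 := hU (mconj X) (mconj_mem X hX)
        rw [target_eq] at h1
        have h2 := null_vec S hS p (mconj X) _
          (fun b => if b.1 = a then (X * V) b.2 k else 0) h1 (by
            rw [dotProduct, Fintype.sum_prod_type, Finset.sum_eq_single a]
            · have e : (∑ j, star ((X * V) j k) * (X *ᵥ (fun j => ψ (a, j))) j) = 0 := by
                have : (X * V)ᴴ *ᵥ (X *ᵥ (fun j => ψ (a, j))) = Vᴴ *ᵥ (fun j => ψ (a, j)) := by
                  rw [Matrix.mulVec_mulVec, Matrix.conjTranspose_mul, Matrix.mul_assoc, hXu,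
                    Matrix.mul_one]
                have := congrFun this k
                simp only [Matrix.mulVec, dotProduct, Matrix.conjTranspose_apply] at this
                rw [hVv k hk] at this
                simpa only [Matrix.mulVec, dotProduct] using this
              simpa [mconj_mconj, Matrix.mulVec, dotProduct] using e
            · intro x _ hx
              simp [hx]
            · simp)
        have h3 := congrFun h2 r
        rw [Matrix.mulVec, dotProduct, Fintype.sum_prod_type_right, Fintype.sum_prod_type,
          Finset.sum_eq_single a] at h3
        · rw [mconj_mconj] at h3
          simp only [if_true, Pi.zero_apply] at h3
          rw [← h3]
          refine Finset.sum_congr rfl fun j _ => ?_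
          simp only [L, LinearMap.coe_mk, AddHom.coe_mk, Finset.sum_mul, choiVec]
          refine Finset.sum_congr rfl fun q _ => ?_
          ring
        · intro x _ hx
          simp [hx]
        · simp
      have hUn : ∀ X ∈ Matrix.unitaryGroup (Fin (n+3)) ℂ, ∀ k, k ≠ 0 →
          ∑ j, L X j * (X * V) j k = 0 := by
        intro X hX k hk
        obtain ⟨c, hc, hcX⟩ := exists_phase (by omega) X hX
        have h := hSU _ hcX k hk
        have e : c * c * ∑ j, L X j * (X * V) j k = 0 := by
          rw [← h, Finset.mul_sum]
          refine Finset.sum_congr rfl fun j _ => ?_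
          rw [map_smul, Matrix.smul_mul]
          simp only [Pi.smul_apply, Matrix.smul_apply, smul_eq_mul]
          ring
        simpa [hc] using e
      let L' : Matrix (Fin (n+3)) (Fin (n+3)) ℂ →ₗ[ℂ] (Fin (n+3) → ℂ) :=
        L ∘ₗ (LinearMap.mulRight ℂ Vᴴ)
      have hL' : ∀ a' l b, L' (Matrix.single a' l 1) b = 0 := by
        apply key L'
        intro X hX k hk
        have h := hUn (X * Vᴴ) (mul_mem hX hV') k hk
        rw [Matrix.mul_assoc, hVV', Matrix.mul_one] at h
        exact h
      have hL0 : L' = 0 := by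
        apply Matrix.ext_linearMap
        intro a' l
        ext b
        simpa using hL' a' l b
      have hL : ∀ X, L X = 0 := by
        intro X
        have : L' (X * V) = 0 := by rw [hL0]; rfl
        simpa [L', Matrix.mul_assoc, hVV] using this
      intro i o j
      have h := congrFun (hL (Matrix.single o i 1)) j
      simp only [L, LinearMap.coe_mk, AddHom.coe_mk] at h
      rw [Finset.sum_eq_single (i, o)] at h
      · simpa using h
      · rintro ⟨i', o'⟩ _ hne
        have : ¬ (o = o' ∧ i = i') := by
          rintro ⟨rfl, rfl⟩; exact hne rfl
        simp [Matrix.single_apply, this]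
      · simp
    have h1 := congrFun (congrFun (hU 1 (one_mem _)) (a, f)) (a, f)
    rw [target_eq, actB_apply] at h1
    simp only [hcol] at h1
    have em : mconj (1 : Matrix (Fin (n+3)) (Fin (n+3)) ℂ) = 1 := by simp [mconj]
    rw [em] at h1
    simp [outer, Matrix.vecMulVec_apply, Matrix.one_apply, haf] at h1
    exact h1
  · intro h2
    subst h2
    let J : Matrix (Fin 2) (Fin 2) ℂ := !![0, 1; -1, 0]
    let K : Matrix (Fin 2) (Fin 2) ℂ := !![0, -1; 1, 0]
    obtain ⟨s, s_def⟩ : ∃ s : (Fin 2 × Fin 2) × (Fin m × Fin 2) → ℂ,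
        ∀ i o a f, s ((i, o), (a, f)) = J f o * (∑ k, K i k * ψ (a, k)) :=
      ⟨fun z => J z.2.2 z.1.2 * (∑ k, K z.1.1 k * ψ (z.2.1, k)), fun _ _ _ _ => rfl⟩
    refine ⟨outer s, outer s, ⟨Matrix.posSemidef_vecMulVec_self_star s, by
      rw [sub_self]; exact Matrix.PosSemidef.zero, ?_⟩, ?_⟩
    · obtain ⟨B, hB⟩ : ∃ B : Matrix (Fin 2) (Fin m) ℂ, ∀ i a, B i a = ∑ k, K i k * ψ (a, k) :=
        ⟨fun i a => ∑ k, K i k * ψ (a, k), fun _ _ => rfl⟩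
      refine ⟨B * Bᴴ, Matrix.posSemidef_self_mul_conjTranspose B, ?_, ?_⟩
      · rw [← hψ]
        simp [Matrix.trace, Matrix.mul_apply, hB, K, dotProduct, Fin.sum_univ_two,
          Fintype.sum_prod_type, Finset.sum_add_distrib]
        rw [add_comm]
        congr 1 <;> (refine Finset.sum_congr rfl fun _ _ => ?_; exact mul_comm _ _)
      · ext ⟨i, o⟩ ⟨i', o'⟩
        simp only [ptrRight, outer, Matrix.vecMulVec_apply, s_def, Pi.star_apply, Fintype.sum_prod_type,
          Matrix.kroneckerMap_apply, Matrix.mul_apply, hB, Matrix.conjTranspose_apply,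
          Fin.sum_univ_two, Finset.sum_mul]
        refine Finset.sum_congr rfl fun a _ => ?_
        fin_cases o <;> fin_cases o' <;> simp [J] <;> ring
    · intro U hU
      rw [target_eq]
      have hadj : Uᴴ = U.adjugate := by
        obtain ⟨hu, hdet⟩ := Matrix.mem_specialUnitaryGroup_iff.1 hU
        have hu' : U * Uᴴ = 1 := Matrix.mem_unitaryGroup_iff.1 hu
        calc Uᴴ = (U.adjugate * U) * Uᴴ := by rw [Matrix.adjugate_mul, hdet]; simp
          _ = U.adjugate := by rw [Matrix.mul_assoc, hu', Matrix.mul_one]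
      rw [Matrix.adjugate_fin_two] at hadj
      have c00 : (starRingEnd ℂ) (U 0 0) = U 1 1 := by simpa using congrFun (congrFun hadj 0) 0
      have c10 : (starRingEnd ℂ) (U 1 0) = - U 0 1 := by simpa using congrFun (congrFun hadj 0) 1
      have c01 : (starRingEnd ℂ) (U 0 1) = - U 1 0 := by simpa using congrFun (congrFun hadj 1) 0
      have c11 : (starRingEnd ℂ) (U 1 1) = U 0 0 := by simpa using congrFun (congrFun hadj 1) 1
      have hs : ∀ b : Fin m × Fin 2, ∑ q, s (q, b) * star (choiVec (mconj U) q)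
          = ∑ j, mconj U b.2 j * ψ (b.1, j) := by
        rintro ⟨a, f⟩
        simp only [s_def, choiVec, mconj, Fintype.sum_prod_type, Fin.sum_univ_two, Matrix.map_apply]
        fin_cases f <;> simp [J, K, c00, c01, c10, c11] <;> ring
      ext b b'
      rw [actB_apply]
      simp only [outer, Matrix.vecMulVec_apply, Matrix.smul_apply, Pi.star_apply]
      rw [← hs b, ← hs b', star_sum, Finset.sum_mul_sum]
      simp only [Complex.ofReal_one, one_smul]
      refine Finset.sum_congr rfl fun p _ => ?_
      refine Finset.sum_congr rfl fun q _ => ?_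
      rw [star_mul', star_star]
      ring
end
end
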